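/- arXiv:1601.00041 — 2 statements merged into one kernel-verified Lean document; each statement's English description precedes it below -/
import Mathlib

section
/- If the theory Th(A_P) of a disjoint P-combination A_P of structures A_i (i ∈ I, each in an at most countable language, |I| ≤ ω, A_P infinite) is ω-categorical, then I is finite and each structure A_i is either finite or ω-categorical. -/
open FirstOrder Language Cardinal

set_option autoImplicit false

/-- The induced structure on a subset of the universe of a structure in a relational language. -/
def subStructure (L : FirstOrder.Language.{0,0}) [L.IsRelational] (M : Type) [L.Structure M]
    (s : Set M) : L.Structure s where
  funMap := fun f _ => isEmptyElim f
  RelMap := fun r x => Structure.RelMap r (fun k => (x k : M))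

/-- The complete theory of the induced structure on a subset. -/
noncomputable def partTheory (L : FirstOrder.Language.{0,0}) [L.IsRelational] (M : Type)
    [L.Structure M] (s : Set M) : L.Theory :=
  @FirstOrder.Language.completeTheory L s (subStructure L M s)

/-- The number of models of `T` of cardinality `κ`, up to isomorphism. -/
noncomputable def numModels (L : FirstOrder.Language.{0,0}) (T : L.Theory) (κ : Cardinal) :
    Cardinal :=
  #(Quot (fun (N N' : {N : FirstOrder.Language.Theory.ModelType.{0,0,0} T // #N.1 = κ}) =>
    Nonempty (N.1 ≃[L] N'.1)))

/-- A theory is ω-categorical if it has exactly one countable model up to isomorphism. -/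
def OmegaCategorical (L : FirstOrder.Language.{0,0}) (T : L.Theory) : Prop :=
  numModels L T ℵ₀ = 1

section Helpers

/-- The disjoint sum of two structures in a relational language. -/
@[reducible] def dsumStr (L : FirstOrder.Language.{0,0}) [L.IsRelational] (A C : Type)
    [L.Structure A] [L.Structure C] : L.Structure (A ⊕ C) where
  funMap := fun f _ => isEmptyElim f
  RelMap := fun r x => (∃ y, x = Sum.inl ∘ y ∧ Structure.RelMap r y) ∨
    (∃ y, x = Sum.inr ∘ y ∧ Structure.RelMap r y)

attribute [local instance] dsumStr

/-- Combine a tuple of `A` with constants of `C`. -/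
def dcomb {A C : Type} {n : ℕ} (σ : Fin n → Option C) (x : Fin n → A) : Fin n → A ⊕ C :=
  fun k => match σ k with
    | none => Sum.inl (x k)
    | some c => Sum.inr c

theorem dcomb_snoc_none {A C : Type} {n : ℕ} (σ : Fin n → Option C) (x : Fin n → A) (z : A) :
    dcomb (Fin.snoc σ none : Fin (n+1) → Option C) (Fin.snoc x z : Fin (n+1) → A) =
      Fin.snoc (dcomb σ x) (Sum.inl z) := by
  funext k
  refine Fin.lastCases ?_ (fun k => ?_) k <;> simp [dcomb]

theorem dcomb_snoc_some {A C : Type} {n : ℕ} (σ : Fin n → Option C) (x : Fin n → A) (z : A)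
    (c : C) :
    dcomb (Fin.snoc σ (some c) : Fin (n+1) → Option C) (Fin.snoc x z : Fin (n+1) → A) =
      Fin.snoc (dcomb σ x) (Sum.inr c) := by
  funext k
  refine Fin.lastCases ?_ (fun k => ?_) k <;> simp [dcomb]

theorem term_is_var {L : FirstOrder.Language.{0,0}} [L.IsRelational] {n : ℕ}
    (t : L.Term (Empty ⊕ Fin n)) : ∃ k, t = Term.var (Sum.inr k) := by
  cases t with
  | var a =>
    rcases a with a | k
    · exact a.elim
    · exact ⟨k, rfl⟩
  | func f _ => exact isEmptyElim f

/-- Feferman-Vaught for disjoint sums with a fixed second summand. -/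
theorem fv (L : FirstOrder.Language.{0,0}) [L.IsRelational] (C : Type) [L.Structure C]
    {n : ℕ} (φ : L.BoundedFormula Empty n) :
    ∃ f : (Fin n → Option C) → L.BoundedFormula Empty n, (Set.range f).Finite ∧
      ∀ (σ : Fin n → Option C) (A : Type) [L.Structure A] [Nonempty A] (x : Fin n → A),
        (f σ).Realize (default : Empty → A) x ↔
          φ.Realize (default : Empty → A ⊕ C) (dcomb σ x) := by
  classical
  induction φ with
  | falsum =>
    refine ⟨fun _ => BoundedFormula.falsum, Set.finite_range_const, ?_⟩
    intro σ A _ _ x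
    exact Iff.rfl
  | @equal n t₁ t₂ =>
    obtain ⟨k₁, rfl⟩ := term_is_var t₁
    obtain ⟨k₂, rfl⟩ := term_is_var t₂
    refine ⟨fun σ => if σ k₁ = none ∧ σ k₂ = none then
      BoundedFormula.equal (Term.var (Sum.inr k₁)) (Term.var (Sum.inr k₂)) else
      if σ k₁ = σ k₂ then ⊤ else ⊥, ?_, ?_⟩
    · refine Set.Finite.subset (s := {BoundedFormula.equal (Term.var (Sum.inr k₁))
        (Term.var (Sum.inr k₂)), ⊤, ⊥}) (by simp) ?_
      rintro _ ⟨σ, rfl⟩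
      dsimp only
      split_ifs <;> simp
    · intro σ A _ _ x
      dsimp only
      rcases h₁ : σ k₁ with _ | c₁ <;> rcases h₂ : σ k₂ with _ | c₂ <;>
        simp [BoundedFormula.Realize, dcomb, h₁, h₂]
      split_ifs with h <;> simp [h]
  | @rel n l R ts =>
    choose k hk using fun i => term_is_var (ts i)
    obtain rfl : ts = fun i => Term.var (Sum.inr (k i)) := funext hk
    refine ⟨fun σ => if ∃ y : Fin l → C, (∀ i, σ (k i) = some (y i)) ∧ Structure.RelMap R y
      then ⊤ else if ∀ i, σ (k i) = none then
      BoundedFormula.rel R (fun i => Term.var (Sum.inr (k i))) else ⊥, ?_, ?_⟩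
    · refine Set.Finite.subset (s := {BoundedFormula.rel R (fun i => Term.var (Sum.inr (k i))),
        ⊤, ⊥}) (by simp) ?_
      rintro _ ⟨σ, rfl⟩
      dsimp only
      split_ifs <;> simp
    · intro σ A _ _ x
      dsimp only
      have key : (BoundedFormula.rel R (fun i => Term.var (Sum.inr (k i)))).Realize
          (default : Empty → A ⊕ C) (dcomb σ x) ↔
          ((∀ i, σ (k i) = none) ∧ Structure.RelMap R (fun i => x (k i))) ∨
          (∃ y : Fin l → C, (∀ i, σ (k i) = some (y i)) ∧ Structure.RelMap R y) := by
        simp only [BoundedFormula.Realize, Term.realize, Sum.elim_inr]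
        refine or_congr ?_ (exists_congr fun y => and_congr_left fun _ => ?_)
        · constructor
          · rintro ⟨y, hy, hr⟩
            have : ∀ i, σ (k i) = none ∧ x (k i) = y i := by
              intro i
              have := congrFun hy i
              rcases h : σ (k i) with _ | c <;> simp [dcomb, h] at this
              exact ⟨rfl, this⟩
            refine ⟨fun i => (this i).1, ?_⟩
            convert hr using 1
            funext i
            exact (this i).2
          · rintro ⟨h, hr⟩
            exact ⟨_, funext fun i => by simp [dcomb, h i], hr⟩
        · rw [funext_iff]
          refine forall_congr' fun i => ?_
          rcases h : σ (k i) with _ | c <;> simp [dcomb, h]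
      rw [key]
      split_ifs with h1 h2
      · simp [h1]
      · simp only [h1, or_false]
        simp only [BoundedFormula.Realize, Term.realize, Sum.elim_inr]
        exact ⟨fun h => ⟨h2, h⟩, fun h => h.2⟩
      · simp [h1, h2]
  | @imp n φ ψ ih₁ ih₂ =>
    obtain ⟨f, hf, hf'⟩ := ih₁
    obtain ⟨g, hg, hg'⟩ := ih₂
    refine ⟨fun σ => (f σ).imp (g σ), ?_, ?_⟩
    · refine (Set.Finite.image2 BoundedFormula.imp hf hg).subset ?_
      rintro _ ⟨σ, rfl⟩
      exact ⟨f σ, ⟨σ, rfl⟩, g σ, ⟨σ, rfl⟩, rfl⟩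
    · intro σ A _ _ x
      simp only [BoundedFormula.realize_imp, hf', hg']
  | @all n φ ih =>
    obtain ⟨f, hf, hf'⟩ := ih
    have : Finite (Set.range f) := hf
    let F : Set (Set.range f) → L.BoundedFormula Empty n := fun S =>
      (BoundedFormula.iInf (fun b : S => (b.1.1 : L.BoundedFormula Empty (n+1)))).all
    refine ⟨fun σ => F {b | ∃ o : Option C, b.1 = f (Fin.snoc σ o : Fin (n+1) → Option C)},
      ?_, ?_⟩
    · refine (Set.finite_range F).subset ?_
      rintro _ ⟨σ, rfl⟩
      exact ⟨_, rfl⟩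
    · intro σ A _ _ x
      simp only [F, BoundedFormula.realize_all, BoundedFormula.realize_iInf]
      constructor
      · intro h a
        rcases a with a | c
        · rw [← dcomb_snoc_none, ← hf']
          exact h a ⟨⟨_, ⟨_, rfl⟩⟩, none, rfl⟩
        · obtain ⟨z⟩ := ‹Nonempty A›
          rw [← dcomb_snoc_some σ x z, ← hf']
          exact h z ⟨⟨_, ⟨_, rfl⟩⟩, some c, rfl⟩
      · rintro h z ⟨⟨b, hb⟩, o, ho⟩
        simp only at ho
        subst ho
        rw [hf']
        rcases o with _ | c
        · rw [dcomb_snoc_none]; exact h _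
        · rw [dcomb_snoc_some]; exact h _

theorem dsum_congr_left {L : FirstOrder.Language.{0,0}} [L.IsRelational] {A B C : Type}
    [L.Structure A] [L.Structure B] [L.Structure C] [Nonempty A] [Nonempty B]
    (h : A ≅[L] B) : (A ⊕ C) ≅[L] (B ⊕ C) := by
  rw [elementarilyEquivalent_iff]
  intro φ
  obtain ⟨f, -, hf⟩ := fv L C φ
  have hA := hf default A default
  have hB := hf default B default
  have e := h.realize_sentence (f default)
  rw [Subsingleton.elim (dcomb _ _) default] at hA hB
  exact hA.symm.trans (e.trans hB)

/-- Commutativity of the disjoint sum. -/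
def dsumComm (L : FirstOrder.Language.{0,0}) [L.IsRelational] (A C : Type)
    [L.Structure A] [L.Structure C] : (A ⊕ C) ≃[L] (C ⊕ A) where
  toEquiv := Equiv.sumComm A C
  map_fun' := fun f _ => isEmptyElim f
  map_rel' := by
    intro n r x
    have key : ∀ (A C : Type) [L.Structure A] [L.Structure C] (x : Fin n → A ⊕ C),
        Structure.RelMap r x → Structure.RelMap r (Equiv.sumComm A C ∘ x) := by
      intro A C _ _ x h
      rcases h with ⟨y, rfl, h⟩ | ⟨y, rfl, h⟩
      · exact Or.inr ⟨y, rfl, h⟩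
      · exact Or.inl ⟨y, rfl, h⟩
    refine ⟨fun h => ?_, key A C x⟩
    have := key C A _ h
    convert this using 1
    funext i
    simp

theorem dsum_congr_right {L : FirstOrder.Language.{0,0}} [L.IsRelational] {A B C : Type}
    [L.Structure A] [L.Structure B] [L.Structure C] [Nonempty A] [Nonempty B]
    (h : A ≅[L] B) : (C ⊕ A) ≅[L] (C ⊕ B) :=
  (StrongHomClass.elementarilyEquivalent (dsumComm L C A)).trans
    ((dsum_congr_left h).trans (StrongHomClass.elementarilyEquivalent (dsumComm L B C)))

theorem OmegaCategorical.iso {L : FirstOrder.Language.{0,0}} {T : L.Theory}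
    (h : OmegaCategorical L T) (A B : Type) [L.Structure A] [L.Structure B]
    [Nonempty A] [Nonempty B] (hA : A ⊨ T) (hB : B ⊨ T) (cA : #A = ℵ₀) (cB : #B = ℵ₀) :
    Nonempty (A ≃[L] B) := by
  have hs := (Cardinal.eq_one_iff_unique.1 h).1
  let a : {N : FirstOrder.Language.Theory.ModelType.{0,0,0} T // #N.1 = ℵ₀} :=
    ⟨Theory.ModelType.of T A, cA⟩
  let b : {N : FirstOrder.Language.Theory.ModelType.{0,0,0} T // #N.1 = ℵ₀} :=
    ⟨Theory.ModelType.of T B, cB⟩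
  have e := Quot.eqvGen_exact (@Subsingleton.elim _ hs (Quot.mk _ a) (Quot.mk _ b))
  rw [Equivalence.eqvGen_iff] at e
  · exact e
  · exact ⟨fun M => ⟨FirstOrder.Language.Equiv.refl L _⟩,
      fun {_ _} => Nonempty.map FirstOrder.Language.Equiv.symm,
      fun {_ _} _ => Nonempty.map2 fun MN NP => NP.comp MN⟩

theorem exists_ctbl {L : FirstOrder.Language.{0,0}} (hcard : L.card ≤ ℵ₀) (A : Type)
    [L.Structure A] [Infinite A] (s : Set A) (hs : s.Countable) :
    ∃ S : L.ElementarySubstructure A, s ⊆ S ∧ #S = ℵ₀ := by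
  obtain ⟨S, h, h'⟩ := exists_elementarySubstructure_card_eq L s (ℵ₀ : Cardinal.{0}) le_rfl
    (by simpa using hs) (by simpa using hcard) (by simp)
  exact ⟨S, h, by simpa using h'⟩

theorem part_cat {L : FirstOrder.Language.{0,0}} [L.IsRelational] (hcard : L.card ≤ ℵ₀)
    (A C : Type) [L.Structure A] [L.Structure C] [Infinite A] (p : L.Relations 1)
    (hpA : ∀ a : A, Structure.RelMap p ![a]) (hpC : ∀ c : C, ¬ Structure.RelMap p ![c])
    (hcat : OmegaCategorical L (L.completeTheory (A ⊕ C))) :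
    OmegaCategorical L (L.completeTheory A) := by
  -- first make `C` countable
  obtain ⟨D, sD, hD, hpD, hDC⟩ : ∃ (D : Type) (_ : L.Structure D), Countable D ∧
      (∀ c : D, ¬ Structure.RelMap p ![c]) ∧ ((A ⊕ C) ≅[L] (A ⊕ D)) := by
    by_cases hC : Infinite C
    · obtain ⟨S, -, hS⟩ := exists_ctbl hcard C ∅ Set.countable_empty
      have hc : Countable S := Cardinal.mk_le_aleph0_iff.1 hS.le
      have : Nonempty S := Cardinal.mk_ne_zero_iff.1 (by rw [hS]; exact aleph0_ne_zero)
      refine ⟨S, inferInstance, hc, ?_, dsum_congr_right S.elementarilyEquivalent.symm⟩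
      intro c h
      apply hpC c
      have := (S.subtype.map_rel p ![c]).2 h
      convert this using 1
      funext i
      simp [Subsingleton.elim i 0]
    · have : Finite C := not_infinite_iff_finite.1 hC
      exact ⟨C, inferInstance, inferInstance, hpC, rfl⟩
  -- transfer of `p`
  have hp : ∀ (N : Type) [L.Structure N], (A ≅[L] N) → ∀ a : N, Structure.RelMap p ![a] := by
    intro N _ h
    let φ : L.Sentence := (p.boundedFormula₁ (Term.var (Sum.inr (0 : Fin 1)))).all
    have hφ : ∀ (B : Type) [L.Structure B], B ⊨ φ ↔ ∀ a : B, Structure.RelMap p ![a] := by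
      intro B _
      simp only [φ, Sentence.Realize, Formula.Realize, BoundedFormula.realize_all,
        BoundedFormula.realize_rel₁, Term.realize, Sum.elim_inr]
      rfl
    exact (hφ N).1 ((h.realize_sentence φ).1 ((hφ A).2 hpA))
  have uniq : ∀ (N N' : Type) [L.Structure N] [L.Structure N'], (A ≅[L] N) → (A ≅[L] N') →
      #N = ℵ₀ → #N' = ℵ₀ → Nonempty (N ≃[L] N') := by
    intro N N' _ _ hN hN' cN cN'
    have : Nonempty N := Cardinal.mk_ne_zero_iff.1 (by rw [cN]; exact aleph0_ne_zero)
    have : Nonempty N' := Cardinal.mk_ne_zero_iff.1 (by rw [cN']; exact aleph0_ne_zero)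
    have e1 : (A ⊕ C) ≅[L] (N ⊕ D) := hDC.trans (dsum_congr_left hN)
    have e2 : (A ⊕ C) ≅[L] (N' ⊕ D) := hDC.trans (dsum_congr_left hN')
    have hD' : #D ≤ ℵ₀ := Cardinal.mk_le_aleph0_iff.2 hD
    obtain ⟨g⟩ := hcat.iso (N ⊕ D) (N' ⊕ D) (e1.theory_model_iff.1 inferInstance)
      (e2.theory_model_iff.1 inferInstance)
      (by simp [cN, Cardinal.add_eq_left le_rfl hD'])
      (by simp [cN', Cardinal.add_eq_left le_rfl hD'])
    have char : ∀ (N : Type) [L.Structure N], (A ≅[L] N) → ∀ z : N ⊕ D,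
        Structure.RelMap p ![z] ↔ z.isLeft := by
      intro N _ h z
      constructor
      · rintro (⟨y, hy, -⟩ | ⟨y, hy, h⟩)
        · have := congrFun hy 0
          simp at this
          simp [this]
        · exfalso
          apply hpD (y 0)
          convert h using 1
          funext i
          simp [Subsingleton.elim i 0]
      · intro hz
        rcases z with a | d
        · refine Or.inl ⟨![a], ?_, hp N h a⟩
          funext i
          simp [Subsingleton.elim i 0]
        · simp at hz
    have gl : ∀ z, (g z).isLeft = z.isLeft := by
      intro z
      rw [Bool.eq_iff_iff, ← char N hN, ← char N' hN', ← g.map_rel]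
      have : (g ∘ ![z]) = ![g z] := by
        funext i
        simp [Subsingleton.elim i 0]
      rw [this]
    have h1 : ∀ a : N, ∃ b : N', g (Sum.inl a) = Sum.inl b := fun a =>
      Sum.isLeft_iff.1 (by rw [gl]; rfl)
    choose u hu using h1
    have ub : Function.Bijective u := by
      constructor
      · intro a b hab
        have : g (Sum.inl a) = g (Sum.inl b) := by rw [hu, hu, hab]
        exact Sum.inl_injective (g.injective this)
      · intro b
        obtain ⟨z, hz⟩ := g.surjective (Sum.inl b)
        have : z.isLeft := by rw [← gl, hz]; rfl
        obtain ⟨a, rfl⟩ := Sum.isLeft_iff.1 this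
        exact ⟨a, Sum.inl_injective (by rw [← hu, hz])⟩
    by_cases hL : ∀ r : L.Relations 0, (Structure.RelMap r (default : Fin 0 → N)) ↔
        (Structure.RelMap r (default : Fin 0 → N'))
    swap
    · exfalso
      apply hL
      intro r
      let φ : L.Sentence := r.formula default
      have hφ : ∀ (B : Type) [L.Structure B], B ⊨ φ ↔ Structure.RelMap r (default : Fin 0 → B) := by
        intro B _
        simp only [φ, Sentence.Realize, Formula.realize_rel]
        rw [Subsingleton.elim (fun i => _) default]
      rw [← hφ, ← hφ]
      exact (hN.symm.trans hN').realize_sentence φ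
    have inlrel : ∀ (N : Type) [L.Structure N] (n : ℕ) (r : L.Relations (n+1))
        (x : Fin (n+1) → N),
        Structure.RelMap r (Sum.inl ∘ x : Fin (n+1) → N ⊕ D) ↔ Structure.RelMap r x := by
      intro N _ n r x
      constructor
      · rintro (⟨y, hy, h⟩ | ⟨y, hy, h⟩)
        · have : x = y := funext fun i => Sum.inl_injective (congrFun hy i)
          rwa [this]
        · have := congrFun hy 0
          simp at this
      · intro h
        exact Or.inl ⟨x, rfl, h⟩
    refine ⟨{ toEquiv := _root_.Equiv.ofBijective u ub
              map_fun' := fun f _ => isEmptyElim f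
              map_rel' := ?_ }⟩
    intro n r x
    rcases n with _ | n
    · rw [Subsingleton.elim x default, hL r]
      exact iff_of_eq (congrArg _ (Subsingleton.elim _ _))
    · rw [← inlrel N, ← inlrel N', ← g.map_rel]
      refine iff_of_eq (congrArg _ ?_)
      funext i
      simp [hu]
  refine Cardinal.eq_one_iff_unique.2 ⟨⟨?_⟩, ?_⟩
  · rintro ⟨⟨N, cN⟩⟩ ⟨⟨N', cN'⟩⟩
    apply Quot.sound
    have eq : ∀ N : Theory.ModelType.{0,0,0} (L.completeTheory A), A ≅[L] N := fun N =>
      (completeTheory.isComplete L A).models_elementarily_equivalent A N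
    exact uniq N N' (eq N) (eq N') cN cN'
  · obtain ⟨S, -, hS⟩ := exists_ctbl hcard A ∅ Set.countable_empty
    have : Nonempty S := Cardinal.mk_ne_zero_iff.1 (by rw [hS]; exact aleph0_ne_zero)
    have : S ⊨ L.completeTheory A := S.elementarilyEquivalent.symm.theory_model_iff.1 inferInstance
    exact ⟨Quot.mk _ ⟨Theory.ModelType.of _ S, hS⟩⟩

theorem index_finite {L : FirstOrder.Language.{0,0}} (hcard : L.card ≤ ℵ₀) (M : Type)
    [L.Structure M] (I : Type) (P : I → L.Relations 1)
    (hdisj : ∀ i j : I, i ≠ j → ∀ a : M,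
      ¬ (Structure.RelMap (P i) ![a] ∧ Structure.RelMap (P j) ![a]))
    (hne : ∀ i : I, ∃ a : M, Structure.RelMap (P i) ![a])
    (hcover : ∀ a : M, ∃ i : I, Structure.RelMap (P i) ![a])
    (hinf : Infinite M)
    (hcat : OmegaCategorical L (L.completeTheory M)) : Finite I := by
  by_contra hI
  have : Infinite I := not_finite_iff_infinite.1 hI
  choose a ha using hne
  have subrel : ∀ (X : Type) [L.Structure X] (S : L.ElementarySubstructure X) (i : I) (c : S),
      Structure.RelMap (P i) ![c] ↔ Structure.RelMap (P i) ![(c : X)] := by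
    intro X _ S i c
    rw [← S.subtype.map_rel]
    refine iff_of_eq (congrArg _ ?_)
    funext i
    simp [Subsingleton.elim i 0]
  let U := (((Filter.hyperfilter I : Ultrafilter I) : Filter I).Product fun _ => M)
  have hU : M ≅[L] U := by
    rw [elementarilyEquivalent_iff]
    intro φ
    rw [Ultraproduct.sentence_realize]
    simp
  have : Infinite U := hU.infinite_iff.1 hinf
  let c : U := ((a : I → M) : U)
  have hc : ∀ j, ¬ Structure.RelMap (P j) ![c] := by
    intro j h
    have h2 := (Ultraproduct.realize_formula_cast (L := L) (u := Filter.hyperfilter I)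
      (M := fun _ => M)
      ((P j).formula₁ (Term.var (0 : Fin 1))) (fun _ => a)).1 (by
        rw [Formula.realize_rel₁]; exact h)
    simp only [Formula.realize_rel₁, Term.realize] at h2
    have h3 : {i : I | Structure.RelMap (P j) ![a i]} ⊆ {j} := by
      intro i hi
      by_contra hij
      exact hdisj i j hij (a i) ⟨ha i, hi⟩
    exact Filter.notMem_hyperfilter_of_finite ((Set.finite_singleton j).subset h3) h2
  obtain ⟨S, hcS, hS⟩ := exists_ctbl hcard U {c} (Set.countable_singleton c)
  obtain ⟨R, -, hR⟩ := exists_ctbl hcard M ∅ Set.countable_empty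
  have : Nonempty S := Cardinal.mk_ne_zero_iff.1 (by rw [hS]; exact aleph0_ne_zero)
  have : Nonempty R := Cardinal.mk_ne_zero_iff.1 (by rw [hR]; exact aleph0_ne_zero)
  obtain ⟨g⟩ := hcat.iso S R
    ((hU.trans S.elementarilyEquivalent.symm).theory_model_iff.1 inferInstance)
    (R.elementarilyEquivalent.symm.theory_model_iff.1 inferInstance) hS hR
  let c' : S := ⟨c, hcS rfl⟩
  obtain ⟨i, hi⟩ := hcover (g c')
  rw [← subrel M R] at hi
  apply hc i
  rw [show c = (c' : U) from rfl, ← subrel U S, ← g.map_rel]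
  convert hi using 1
  funext i
  simp [Subsingleton.elim i 0]

theorem cat_congr {L : FirstOrder.Language.{0,0}} {A B : Type} [L.Structure A] [L.Structure B]
    (h : A ≅[L] B) (hA : OmegaCategorical L (L.completeTheory A)) :
    OmegaCategorical L (L.completeTheory B) := by
  have : L.completeTheory A = L.completeTheory B := h
  rwa [← this]

end Helpers

/-- if the theory of a disjoint `P`-combination (an infinite structure `M` covered
by pairwise disjoint unary predicates `P i`, `i ∈ I`, with no relations linking distinct parts,
in an at most countable language, with `|I| ≤ ω`) is ω-categorical, then `I` is finite and each
part is finite or ω-categorical. -/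
theorem stmt1 (L : FirstOrder.Language.{0,0}) [L.IsRelational] (M : Type) [L.Structure M]
    (I : Type) (P : I → L.Relations 1)
    (hctbl : Countable I)
    (hcard : L.card ≤ ℵ₀)
    (hdisj : ∀ i j : I, i ≠ j → ∀ a : M,
      ¬ (Structure.RelMap (P i) ![a] ∧ Structure.RelMap (P j) ![a]))
    (hne : ∀ i : I, ∃ a : M, Structure.RelMap (P i) ![a])
    (hcover : ∀ a : M, ∃ i : I, Structure.RelMap (P i) ![a])
    (hnocross : ∀ (n : ℕ) (r : L.Relations n) (x : Fin n → M),
      Structure.RelMap r x → ∃ i : I, ∀ k : Fin n, Structure.RelMap (P i) ![x k])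
    (hinf : Infinite M)
    (hcat : OmegaCategorical L (L.completeTheory M)) :
    Finite I ∧ ∀ i : I,
      Set.Finite {a : M | Structure.RelMap (P i) ![a]} ∨
        OmegaCategorical L (partTheory L M {a : M | Structure.RelMap (P i) ![a]}) := by
  refine ⟨index_finite hcard M I P hdisj hne hcover hinf hcat, fun i => ?_⟩
  by_cases hfin : Set.Finite {a : M | Structure.RelMap (P i) ![a]}
  · exact Or.inl hfin
  right
  set s : Set M := {a : M | Structure.RelMap (P i) ![a]} with hs
  have hsi : Infinite s := Set.infinite_coe_iff.2 hfin
  let i1 : L.Structure s := subStructure L M s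
  let i2 : L.Structure (sᶜ : Set M) := subStructure L M sᶜ
  let i3 : L.Structure (s ⊕ (sᶜ : Set M)) := dsumStr L s (sᶜ : Set M)
  classical
  have e : (s ⊕ (sᶜ : Set M)) ≃[L] M :=
    { toEquiv := _root_.Equiv.Set.sumCompl s
      map_fun' := fun f _ => isEmptyElim f
      map_rel' := by
        intro n r x
        constructor
        · intro h
          obtain ⟨j, hj⟩ := hnocross n r _ h
          by_cases hij : j = i
          · subst hij
            refine Or.inl ⟨fun k => ⟨_, hj k⟩, ?_, h⟩
            funext k
            apply (_root_.Equiv.Set.sumCompl s).injective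
            simp
          · have hj' : ∀ k, _root_.Equiv.Set.sumCompl s (x k) ∈ sᶜ := fun k hk =>
              hdisj j i hij _ ⟨hj k, hk⟩
            refine Or.inr ⟨fun k => ⟨_, hj' k⟩, ?_, h⟩
            funext k
            apply (_root_.Equiv.Set.sumCompl s).injective
            simp
        · rintro (⟨y, rfl, h⟩ | ⟨y, rfl, h⟩)
          · exact h
          · exact h }
  have v1 : ∀ (t : Set M) (a : t), (fun k => ((![a] : Fin 1 → t) k : M)) = ![(a : M)] := by
    intro t a
    funext k
    simp [Subsingleton.elim k 0]
  refine part_cat hcard s (sᶜ : Set M) (P i) ?_ ?_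
    (cat_congr (StrongHomClass.elementarilyEquivalent e).symm hcat)
  · intro a
    change Structure.RelMap (P i) (fun k => ((![a] : Fin 1 → s) k : M))
    rw [v1]
    exact a.2
  · intro a
    change ¬ Structure.RelMap (P i) (fun k => ((![a] : Fin 1 → (sᶜ : Set M)) k : M))
    rw [v1]
    exact a.2
end

section
/- If predicates P_i are pairwise disjoint, I is finite, each structure A_i is either finite, ω-categorical, or Ehrenfeucht, and at least one A_i is Ehrenfeucht, then the theory T = Th(A_P) of the infinite disjoint P-combination is Ehrenfeucht; moreover I(T, ω) = ∏_{i∈I} I(Th(A_i), min{|A_i|, ω}). -/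
open FirstOrder Language Cardinal

set_option autoImplicit false

/-- A theory is Ehrenfeucht if it has finitely many, but more than one, countable models. -/
def Ehrenfeucht (L : FirstOrder.Language.{0,0}) (T : L.Theory) : Prop :=
  1 < numModels L T ℵ₀ ∧ numModels L T ℵ₀ < ℵ₀

/-- Disjoint union of structures in a relational language. -/
def sigStr (L : FirstOrder.Language.{0,0}) [L.IsRelational] {I : Type} (N : I → Type)
    [∀ i, L.Structure (N i)] : L.Structure (Σ i, N i) where
  funMap := fun f _ => isEmptyElim f
  RelMap := fun {_} r x => ∃ i, ∃ y : Fin _ → N i, (x = fun k => ⟨i, y k⟩) ∧ Structure.RelMap r y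

lemma term_var {L : FirstOrder.Language.{0,0}} [L.IsRelational] {n : ℕ}
    (t : L.Term (Empty ⊕ Fin n)) : ∃ k : Fin n, t = Term.var (Sum.inr k) := by
  cases t with
  | var a =>
    cases a with
    | inl e => exact e.elim
    | inr k => exact ⟨k, rfl⟩
  | func f _ => exact isEmptyElim f

lemma sig_mk_eq {I : Type} {K : I → Type} (w : ∀ i, K i) {i j : I} (h : i = j) :
    (⟨i, w i⟩ : Σ i, K i) = ⟨j, w j⟩ := by
  subst h; rfl

lemma sig_mk_inj {I : Type} {K : I → Type} (w : ∀ i, K i) {i j : I} {y : K j}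
    (h : (⟨i, w i⟩ : Σ i, K i) = ⟨j, y⟩) : w j = y := by
  cases h; rfl

section SigmaStructure

attribute [local instance] sigStr

lemma fv_aux {L : FirstOrder.Language.{0,0}} [L.IsRelational] {n : ℕ}
    (φ : L.BoundedFormula Empty n) :
    ∃ S : Set (L.BoundedFormula Empty n), S.Finite ∧
      ∀ (I : Type) (N N' : I → Type) [∀ i, L.Structure (N i)] [∀ i, L.Structure (N' i)]
        [∀ i, Nonempty (N i)] [∀ i, Nonempty (N' i)] (c : Fin n → I)
        (v : ∀ i, Fin n → N i) (v' : ∀ i, Fin n → N' i),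
        (∀ i, ∀ ψ ∈ S, ψ.Realize default (v i) ↔ ψ.Realize default (v' i)) →
        (φ.Realize (M := Σ i, N i) default (fun k => ⟨c k, v (c k) k⟩) ↔
          φ.Realize (M := Σ i, N' i) default (fun k => ⟨c k, v' (c k) k⟩)) := by
  induction φ with
  | falsum => exact ⟨∅, Set.finite_empty, by intros; rfl⟩
  | @equal n t₁ t₂ =>
    obtain ⟨a, rfl⟩ := term_var t₁
    obtain ⟨b, rfl⟩ := term_var t₂
    refine ⟨{BoundedFormula.equal (Term.var (Sum.inr a)) (Term.var (Sum.inr b))},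
      Set.finite_singleton _, ?_⟩
    intro I N N' _ _ _ _ c v v' h
    have h := fun i => h i _ rfl
    simp only [BoundedFormula.Realize, Term.realize_var, Sum.elim_inr] at h ⊢
    have key : ∀ (K : I → Type) (w : ∀ i, Fin n → K i),
        ((⟨c a, w (c a) a⟩ : Σ i, K i) = ⟨c b, w (c b) b⟩) ↔
          (c a = c b ∧ w (c a) a = w (c a) b) := by
      intro K w
      constructor
      · intro e
        have e1 : c a = c b := congrArg Sigma.fst e
        refine ⟨e1, ?_⟩
        rw [← e1] at e
        exact eq_of_heq (Sigma.mk.inj e).2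
      · rintro ⟨e1, e2⟩
        rw [← e1, e2]
    rw [key, key, h]
  | @rel n l r ts =>
    choose t ht using fun k => term_var (ts k)
    obtain rfl : ts = fun k => Term.var (Sum.inr (t k)) := funext ht
    refine ⟨{BoundedFormula.rel r (fun k => Term.var (Sum.inr (t k)))},
      Set.finite_singleton _, ?_⟩
    intro I N N' _ _ _ _ c v v' h
    have h := fun i => h i _ rfl
    simp only [BoundedFormula.Realize, Term.realize_var, Sum.elim_inr] at h ⊢
    have key : ∀ (K : I → Type) [∀ i, L.Structure (K i)] (w : ∀ i, Fin n → K i),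
        (Structure.RelMap (M := Σ i, K i) r (fun k => ⟨c (t k), w (c (t k)) (t k)⟩) ↔
          ∃ i, (∀ k, c (t k) = i) ∧ Structure.RelMap r (fun k => w i (t k))) := by
      intro K _ w
      constructor
      · rintro ⟨i, y, e, hy⟩
        have e1 : ∀ k, c (t k) = i := fun k => congrArg Sigma.fst (congrFun e k)
        refine ⟨i, e1, ?_⟩
        convert hy using 2 with k
        exact sig_mk_inj (fun i => w i (t k)) (congrFun e k)
      · rintro ⟨i, e1, hy⟩
        refine ⟨i, _, ?_, hy⟩
        funext k
        rw [e1 k]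
    rw [key, key]
    exact exists_congr fun i => and_congr_right fun _ => h i
  | imp φ ψ ih1 ih2 =>
    obtain ⟨S1, f1, h1⟩ := ih1
    obtain ⟨S2, f2, h2⟩ := ih2
    refine ⟨S1 ∪ S2, f1.union f2, ?_⟩
    intro I N N' _ _ _ _ c v v' h
    simp only [BoundedFormula.realize_imp]
    rw [h1 I N N' c v v' (fun i χ hχ => h i χ (Or.inl hχ)),
      h2 I N N' c v v' (fun i χ hχ => h i χ (Or.inr hχ))]
  | @all n φ ih =>
    classical
    obtain ⟨S, fS, hS⟩ := ih
    have : Finite S := fS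
    refine ⟨Set.range (fun T : Set S =>
      (BoundedFormula.iInf (fun ψ : S => if ψ ∈ T then ψ.1 else ∼ψ.1)).ex), Set.finite_range _, ?_⟩
    have key : ∀ (K K' : Type) [L.Structure K] [L.Structure K'] (w : Fin n → K) (w' : Fin n → K'),
        (∀ ψ ∈ Set.range (fun T : Set S =>
          (BoundedFormula.iInf (fun ψ : S => if ψ ∈ T then ψ.1 else ∼ψ.1)).ex),
            ψ.Realize default w ↔ ψ.Realize default w') →
        ∀ b' : K', ∃ b : K, ∀ ψ ∈ S, ψ.Realize default (Fin.snoc w b : Fin (n+1) → K) ↔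
          ψ.Realize default (Fin.snoc w' b' : Fin (n+1) → K') := by
      intro K K' _ _ w w' h b'
      have := (h _ ⟨{ψ | ψ.1.Realize default (Fin.snoc w' b' : Fin (n+1) → K')}, rfl⟩).2 (by
        rw [BoundedFormula.realize_ex]
        refine ⟨b', ?_⟩
        rw [BoundedFormula.realize_iInf]
        intro ψ
        split_ifs with hh
        · exact hh
        · exact hh)
      rw [BoundedFormula.realize_ex] at this
      obtain ⟨b, hb⟩ := this
      refine ⟨b, fun ψ hψ => ?_⟩
      rw [BoundedFormula.realize_iInf] at hb
      have := hb ⟨ψ, hψ⟩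
      split_ifs at this with hh
      · exact ⟨fun _ => hh, fun _ => this⟩
      · exact ⟨fun h => absurd h this, fun h => absurd h hh⟩
    have main : ∀ (I : Type) (N N' : I → Type) [∀ i, L.Structure (N i)] [∀ i, L.Structure (N' i)]
        [∀ i, Nonempty (N i)] [∀ i, Nonempty (N' i)] (c : Fin n → I)
        (v : ∀ i, Fin n → N i) (v' : ∀ i, Fin n → N' i),
        (∀ i, ∀ ψ ∈ Set.range (fun T : Set S =>
          (BoundedFormula.iInf (fun ψ : S => if ψ ∈ T then ψ.1 else ∼ψ.1)).ex),
            ψ.Realize default (v i) ↔ ψ.Realize default (v' i)) →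
        φ.all.Realize (M := Σ i, N i) default (fun k => ⟨c k, v (c k) k⟩) →
          φ.all.Realize (M := Σ i, N' i) default (fun k => ⟨c k, v' (c k) k⟩) := by
      intro I N N' _ _ _ _ c v v' h hφ
      rw [BoundedFormula.realize_all] at hφ ⊢
      rintro ⟨j, b⟩
      let b' : ∀ i, N' i := Function.update (fun i => Classical.arbitrary _) j b
      choose a ha using fun i => key (N i) (N' i) (v i) (v' i) (h i) (b' i)
      have := (hS I N N' (Fin.snoc c j) (fun i => Fin.snoc (v i) (a i))
        (fun i => Fin.snoc (v' i) (b' i)) ha).1 (by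
          convert hφ ⟨j, a j⟩ using 1
          funext k
          refine Fin.lastCases ?_ (fun k => ?_) k
          · simp only [Fin.snoc_last]
            exact sig_mk_eq a (Fin.snoc_last ..)
          · simp only [Fin.snoc_castSucc]
            exact sig_mk_eq (fun i => v i k) (Fin.snoc_castSucc ..))
      convert this using 1
      funext k
      refine Fin.lastCases ?_ (fun k => ?_) k
      · simp only [Fin.snoc_last]
        refine Eq.trans ?_ (sig_mk_eq b' (Fin.snoc_last ..)).symm
        simp [b']
      · simp only [Fin.snoc_castSucc]
        exact (sig_mk_eq (fun i => v' i k) (Fin.snoc_castSucc ..)).symm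
    intro I N N' _ _ _ _ c v v' h
    exact ⟨main I N N' c v v' h, main I N' N c v' v (fun i ψ hψ => (h i ψ hψ).symm)⟩

lemma sig_equiv {L : FirstOrder.Language.{0,0}} [L.IsRelational] {I : Type} (N N' : I → Type)
    [∀ i, L.Structure (N i)] [∀ i, L.Structure (N' i)]
    [∀ i, Nonempty (N i)] [∀ i, Nonempty (N' i)]
    (h : ∀ i, (N i) ≅[L] (N' i)) : (Σ i, N i) ≅[L] (Σ i, N' i) := by
  rw [elementarilyEquivalent_iff]
  intro φ
  obtain ⟨S, -, hS⟩ := fv_aux φ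
  have := hS I N N' Fin.elim0 (fun _ => Fin.elim0) (fun _ => Fin.elim0) (by
    intro i ψ _
    have := (elementarilyEquivalent_iff.1 (h i)) ψ
    simp only [Sentence.Realize, Formula.Realize] at this
    convert this)
  simp only [Sentence.Realize, Formula.Realize]
  convert this

end SigmaStructure

/-- universal closures transfer -/
lemma transfer {L : FirstOrder.Language.{0,0}} {M N : Type} [L.Structure M] [L.Structure N]
    (h : M ≅[L] N) {n : ℕ} (φ : L.BoundedFormula Empty n)
    (hM : ∀ x : Fin n → M, φ.Realize default x) (x : Fin n → N) : φ.Realize default x := by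
  have h1 : M ⊨ φ.alls := by
    rw [Sentence.Realize, BoundedFormula.realize_alls]; exact hM
  have h2 := ((elementarilyEquivalent_iff.1 h) _).1 h1
  rw [Sentence.Realize, BoundedFormula.realize_alls] at h2
  exact h2 x

lemma relativize {L : FirstOrder.Language.{0,0}} [L.IsRelational] (P : L.Relations 1) {n : ℕ}
    (φ : L.BoundedFormula Empty n) : ∃ ψ : L.BoundedFormula Empty n,
      ∀ (M : Type) [L.Structure M] (x : Fin n → {a : M | Structure.RelMap P ![a]}),
        (ψ.Realize default (fun k => (x k : M)) ↔
          @BoundedFormula.Realize L _ (subStructure L M {a : M | Structure.RelMap P ![a]}) _ _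
            φ default x) := by
  induction φ with
  | falsum => exact ⟨⊥, fun M _ x => Iff.rfl⟩
  | @equal n t₁ t₂ =>
    obtain ⟨a, rfl⟩ := term_var t₁
    obtain ⟨b, rfl⟩ := term_var t₂
    refine ⟨BoundedFormula.equal (Term.var (Sum.inr a)) (Term.var (Sum.inr b)), ?_⟩
    intro M _ x
    simp only [BoundedFormula.Realize, Term.realize_var, Sum.elim_inr]
    exact Subtype.coe_inj
  | @rel n l r ts =>
    choose t ht using fun k => term_var (ts k)
    obtain rfl : ts = fun k => Term.var (Sum.inr (t k)) := funext ht
    refine ⟨BoundedFormula.rel r (fun k => Term.var (Sum.inr (t k))), ?_⟩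
    intro M _ x
    simp only [BoundedFormula.Realize, Term.realize_var, Sum.elim_inr]
    exact Iff.rfl
  | imp φ ψ ih1 ih2 =>
    obtain ⟨φ', h1⟩ := ih1
    obtain ⟨ψ', h2⟩ := ih2
    refine ⟨φ'.imp ψ', fun M _ x => ?_⟩
    rw [BoundedFormula.realize_imp, h1, h2]
    exact Iff.rfl
  | @all n φ ih =>
    obtain ⟨φ', h⟩ := ih
    refine ⟨((BoundedFormula.rel P ![Term.var (Sum.inr (Fin.last n))]).imp φ').all, fun M _ x => ?_⟩
    rw [BoundedFormula.realize_all]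
    let _ := subStructure L M {a : M | Structure.RelMap P ![a]}
    rw [BoundedFormula.realize_all]
    have e : ∀ a : M, (BoundedFormula.rel P ![Term.var (Sum.inr (Fin.last n))] :
        L.BoundedFormula Empty (n+1)).Realize default
          (Fin.snoc (fun k => (x k : M)) a : Fin (n+1) → M) ↔
          Structure.RelMap P ![a] := by
      intro a
      simp only [BoundedFormula.Realize]
      apply iff_of_eq
      congr 1
      funext k
      simp [Subsingleton.elim k 0]
    have e2 : ∀ a : {a : M | Structure.RelMap P ![a]},
        (Fin.snoc (fun k => (x k : M)) a.1 : Fin (n+1) → M) = fun k => ((Fin.snoc x a :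
          Fin (n+1) → {a : M | Structure.RelMap P ![a]}) k : M) := by
      intro a
      funext k
      refine Fin.lastCases ?_ (fun k => ?_) k <;> simp
    constructor
    · intro hh a
      rw [← h, ← e2]
      exact (BoundedFormula.realize_imp.1 (hh a.1)) ((e _).2 a.2)
    · intro hh a
      rw [BoundedFormula.realize_imp, e]
      intro ha
      have := hh ⟨a, ha⟩
      rw [← h, ← e2] at this
      exact this

/-- The part of a structure cut out by a unary predicate. -/
abbrev part {L : FirstOrder.Language.{0,0}} (P : L.Relations 1) (M : Type) [L.Structure M] : Set M :=
  {a : M | Structure.RelMap P ![a]}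

lemma part_equiv {L : FirstOrder.Language.{0,0}} [L.IsRelational] (P : L.Relations 1) {M N : Type}
    [L.Structure M] [L.Structure N] (h : M ≅[L] N) :
    @ElementarilyEquivalent L (part P M) (part P N) (subStructure L M _) (subStructure L N _) := by
  let _ := subStructure L M (part P M)
  let _ := subStructure L N (part P N)
  rw [elementarilyEquivalent_iff]
  intro φ
  obtain ⟨ψ, hψ⟩ := relativize P φ
  have h1 := hψ M default
  have h2 := hψ N default
  have h3 := (elementarilyEquivalent_iff.1 h) ψ
  simp only [Sentence.Realize, Formula.Realize] at h3 ⊢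
  rw [← h1, ← h2]
  convert h3

lemma finite_tuple {L : FirstOrder.Language.{0,0}} {M N : Type} [L.Structure M] [L.Structure N]
    [Finite N] (h : M ≅[L] N) {n : ℕ} (m : Fin n → M) :
    ∃ y : Fin n → N, ∀ ψ : L.BoundedFormula Empty n, ψ.Realize default m → ψ.Realize default y := by
  by_contra hc
  push Not at hc
  choose ψ h1 h2 using hc
  have := transfer h (BoundedFormula.iInf ψ).not
  by_cases hh : ∀ x : Fin n → M, (BoundedFormula.iInf ψ).not.Realize default x
  · have := hh m
    rw [BoundedFormula.realize_not, BoundedFormula.realize_iInf] at this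
    exact this h1
  · have h4 : ¬ M ⊨ (BoundedFormula.iInf ψ).not.alls := by
      rw [Sentence.Realize, BoundedFormula.realize_alls]; exact hh
    rw [(elementarilyEquivalent_iff.1 h) _, Sentence.Realize, BoundedFormula.realize_alls] at h4
    apply h4
    intro y
    rw [BoundedFormula.realize_not, BoundedFormula.realize_iInf]
    exact fun h => h2 y (h y)

lemma finite_iso {L : FirstOrder.Language.{0,0}} [L.IsRelational] {M N : Type} [L.Structure M]
    [L.Structure N] [Finite M] (h : M ≅[L] N) (hc : #M = #N) : Nonempty (M ≃[L] N) := by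
  obtain ⟨e0⟩ := Cardinal.eq.1 hc
  have : Finite N := Finite.of_equiv M e0
  obtain ⟨n, ⟨m⟩⟩ := Finite.exists_equiv_fin M
  obtain ⟨y, hy⟩ := finite_tuple h m.symm
  have hy' : ∀ ψ : L.BoundedFormula Empty n, ψ.Realize default m.symm ↔ ψ.Realize default y :=
    fun ψ => ⟨hy ψ, fun h => by
      by_contra h'
      exact hy ψ.not h' h⟩
  have inj : Function.Injective y := by
    intro a b hab
    have := hy' (BoundedFormula.equal (Term.var (Sum.inr a)) (Term.var (Sum.inr b)))
    simp only [BoundedFormula.Realize, Term.realize_var, Sum.elim_inr] at this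
    exact m.symm.injective (this.2 hab)
  have inj2 : Function.Injective (y ∘ m) := inj.comp m.injective
  have bij : Function.Bijective (y ∘ m) := by
    have : Function.Injective (e0.symm ∘ (y ∘ m)) := e0.symm.injective.comp inj2
    have := Finite.injective_iff_surjective.1 this
    refine ⟨inj2, ?_⟩
    intro b
    obtain ⟨a, ha⟩ := this (e0.symm b)
    exact ⟨a, e0.symm.injective ha⟩
  refine ⟨⟨Equiv.ofBijective _ bij, fun f => isEmptyElim f, ?_⟩⟩
  intro k r x
  have := hy' (BoundedFormula.rel r (fun k => Term.var (Sum.inr (m (x k)))))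
  simp only [BoundedFormula.Realize, Term.realize_var, Sum.elim_inr, Equiv.symm_apply_apply] at this
  exact this.symm

lemma card_ge_iff {L : FirstOrder.Language.{0,0}} {M N : Type} [L.Structure M]
    [L.Structure N] (h : M ≅[L] N) (n : ℕ) : (n : Cardinal) ≤ #M ↔ (n : Cardinal) ≤ #N := by
  have := (elementarilyEquivalent_iff.1 h) (Sentence.cardGe L n)
  rwa [Sentence.realize_cardGe, Sentence.realize_cardGe] at this

lemma min_card {L : FirstOrder.Language.{0,0}} {M N : Type} [L.Structure M]
    [L.Structure N] (h : M ≅[L] N) : min #M ℵ₀ = min #N ℵ₀ := by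
  have key : ∀ (M N : Type) [L.Structure M] [L.Structure N], M ≅[L] N →
      min #M ℵ₀ ≤ min #N ℵ₀ := by
    intro M N _ _ h
    refine le_min ?_ (min_le_right _ _)
    rcases lt_or_ge #M ℵ₀ with hM | hM
    · obtain ⟨n, hn⟩ := Cardinal.lt_aleph0.1 hM
      rw [min_eq_left hM.le, hn, ← card_ge_iff h, hn]
    · rw [min_eq_right hM, Cardinal.aleph0_le]
      intro n
      rw [← card_ge_iff h]
      exact (Cardinal.natCast_le_aleph0).trans hM
  exact le_antisymm (key _ _ h) (key _ _ h.symm)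

section Combination

attribute [local instance] sigStr subStructure

/-- `N` is a disjoint combination with respect to the predicates `P i`. -/
structure Comb {L : FirstOrder.Language.{0,0}} {I : Type} (P : I → L.Relations 1) (N : Type)
    [L.Structure N] : Prop where
  disj : ∀ i j : I, i ≠ j → ∀ a : N,
      ¬ (Structure.RelMap (P i) ![a] ∧ Structure.RelMap (P j) ![a])
  ne : ∀ i : I, ∃ a : N, Structure.RelMap (P i) ![a]
  cover : ∀ a : N, ∃ i : I, Structure.RelMap (P i) ![a]
  nocross : ∀ (n : ℕ) (r : L.Relations n) (x : Fin n → N),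
      Structure.RelMap r x → ∃ i : I, ∀ k : Fin n, Structure.RelMap (P i) ![x k]

/-- The atomic formula `P x_k`. -/
def atP {L : FirstOrder.Language.{0,0}} (P : L.Relations 1) {n : ℕ} (k : Fin n) :
    L.BoundedFormula Empty n :=
  BoundedFormula.rel P ![Term.var (Sum.inr k)]

lemma realize_atP {L : FirstOrder.Language.{0,0}} (P : L.Relations 1) {n : ℕ} (k : Fin n)
    {N : Type} [L.Structure N] (x : Fin n → N) :
    (atP P k).Realize default x ↔ Structure.RelMap P ![x k] := by
  simp only [atP, BoundedFormula.Realize]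
  apply iff_of_eq
  congr 1
  funext j
  simp [Subsingleton.elim j 0]

lemma Comb.transfer {L : FirstOrder.Language.{0,0}} {I : Type} [Finite I] {P : I → L.Relations 1}
    {M N : Type} [L.Structure M] [L.Structure N] (hM : Comb P M) (h : M ≅[L] N) : Comb P N where
  disj i j hij a := by
    have := _root_.transfer h (n := 1) ((atP (P i) 0).imp (atP (P j) 0).not) (by
      intro x
      rw [BoundedFormula.realize_imp, BoundedFormula.realize_not, realize_atP, realize_atP]
      exact fun h1 h2 => hM.disj i j hij _ ⟨h1, h2⟩) (fun _ => a)
    rw [BoundedFormula.realize_imp, BoundedFormula.realize_not, realize_atP, realize_atP] at this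
    exact fun h => this h.1 h.2
  ne i := by
    by_contra hc
    push Not at hc
    obtain ⟨a, ha⟩ := hM.ne i
    have := _root_.transfer h.symm (n := 1) (atP (P i) 0).not (by
      intro x
      rw [BoundedFormula.realize_not, realize_atP]
      exact hc _) (fun _ => a)
    rw [BoundedFormula.realize_not, realize_atP] at this
    exact this ha
  cover a := by
    have := _root_.transfer h (n := 1) (BoundedFormula.iSup fun i => atP (P i) 0) (by
      intro x
      rw [BoundedFormula.realize_iSup]
      obtain ⟨i, hi⟩ := hM.cover (x 0)
      exact ⟨i, (realize_atP ..).2 hi⟩) (fun _ => a)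
    rw [BoundedFormula.realize_iSup] at this
    obtain ⟨i, hi⟩ := this
    exact ⟨i, (realize_atP ..).1 hi⟩
  nocross n r x hr := by
    have key : ∀ (K : Type) [L.Structure K] (x : Fin n → K),
        ((BoundedFormula.rel r (fun k => Term.var (Sum.inr k))).imp
          (BoundedFormula.iSup fun i => BoundedFormula.iInf fun k => atP (P i) k) :
            L.BoundedFormula Empty n).Realize default x ↔
        (Structure.RelMap r x → ∃ i : I, ∀ k : Fin n, Structure.RelMap (P i) ![x k]) := by
      intro K _ x
      rw [BoundedFormula.realize_imp, BoundedFormula.realize_iSup]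
      simp only [BoundedFormula.realize_iInf, realize_atP]
      exact Iff.rfl
    exact (key N x).1 (_root_.transfer h _ (fun x => (key M x).2 (hM.nocross n r x)) x) hr

lemma part_iso {L : FirstOrder.Language.{0,0}} [L.IsRelational] (P : L.Relations 1) {M N : Type}
    [L.Structure M] [L.Structure N] (e : M ≃[L] N) : Nonempty (part P M ≃[L] part P N) := by
  have h : ∀ a, Structure.RelMap P ![a] ↔ Structure.RelMap P ![e a] := by
    intro a
    rw [← e.map_rel P ![a] ]
    apply iff_of_eq
    congr 1
    funext j
    simp [Subsingleton.elim j 0]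
  exact ⟨⟨e.toEquiv.subtypeEquiv h, fun f => isEmptyElim f, fun r x => e.map_rel r _⟩⟩

lemma sig_iso {L : FirstOrder.Language.{0,0}} [L.IsRelational] {I : Type} {K K' : I → Type}
    [∀ i, L.Structure (K i)] [∀ i, L.Structure (K' i)] (e : ∀ i, K i ≃[L] K' i) :
    Nonempty ((Σ i, K i) ≃[L] (Σ i, K' i)) := by
  refine ⟨⟨Equiv.sigmaCongrRight fun i => (e i).toEquiv, fun f => isEmptyElim f, ?_⟩⟩
  intro n r x
  constructor
  · rintro ⟨i, y, hx, hy⟩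
    refine ⟨i, fun k => (e i).symm (y k), ?_, ?_⟩
    · funext k
      apply (Equiv.sigmaCongrRight fun i => (e i).toEquiv).injective
      refine (congrFun hx k).trans ?_
      refine Sigma.ext rfl (heq_of_eq ?_)
      exact ((e i).apply_symm_apply (y k)).symm
    · exact ((e i).symm.map_rel r y).2 hy
  · rintro ⟨i, y, rfl, hy⟩
    exact ⟨i, fun k => e i (y k), rfl, ((e i).map_rel r y).2 hy⟩

lemma comb_iso {L : FirstOrder.Language.{0,0}} [L.IsRelational] {I : Type}
    {P : I → L.Relations 1} {N : Type} [L.Structure N] (h : Comb P N) :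
    Nonempty ((Σ i, part (P i) N) ≃[L] N) := by
  have bij : Function.Bijective (fun a : Σ i, part (P i) N => (a.2 : N)) := by
    constructor
    · rintro ⟨i, a, ha⟩ ⟨j, b, hb⟩ hab
      obtain rfl : a = b := hab
      have : i = j := by
        by_contra hij
        exact h.disj i j hij a ⟨ha, hb⟩
      subst this
      rfl
    · intro a
      obtain ⟨i, hi⟩ := h.cover a
      exact ⟨⟨i, a, hi⟩, rfl⟩
  refine ⟨⟨Equiv.ofBijective _ bij, fun f => isEmptyElim f, ?_⟩⟩
  intro n r x
  constructor
  · intro hr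
    obtain ⟨i, hi⟩ := h.nocross n r _ hr
    refine ⟨i, fun k => ⟨_, hi k⟩, ?_, hr⟩
    funext k
    apply bij.1
    rfl
  · rintro ⟨i, y, rfl, hy⟩
    exact hy

lemma sig_part {L : FirstOrder.Language.{0,0}} [L.IsRelational] {I : Type}
    {P : I → L.Relations 1} {K : I → Type} [∀ i, L.Structure (K i)]
    (h1 : ∀ i (a : K i), Structure.RelMap (P i) ![a])
    (h2 : ∀ i j, i ≠ j → ∀ a : K j, ¬ Structure.RelMap (P i) ![a])
    (h3 : ∀ (r : L.Relations 0) i j, Structure.RelMap r (default : Fin 0 → K i) →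
      Structure.RelMap r (default : Fin 0 → K j)) (i : I) :
    Nonempty (K i ≃[L] part (P i) (Σ i, K i)) := by
  have hP : ∀ a : K i, Structure.RelMap (P i) ![(⟨i, a⟩ : Σ i, K i)] := by
    intro a
    refine ⟨i, ![a], ?_, h1 i a⟩
    funext k
    simp [Subsingleton.elim k 0]
  have hP' : ∀ a : Σ i, K i, Structure.RelMap (P i) ![a] → a.1 = i := by
    rintro a ⟨j, y, hx, hy⟩
    have e : a = ⟨j, y 0⟩ := congrFun hx 0
    rw [e]
    by_contra hij
    refine h2 i j (fun h => hij h.symm) (y 0) ?_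
    convert hy using 1
    funext k
    simp [Subsingleton.elim k 0]
  have bij : Function.Bijective (fun a : K i => (⟨⟨i, a⟩, hP a⟩ : part (P i) (Σ i, K i))) := by
    constructor
    · intro a b hab
      have := congrArg Subtype.val hab
      exact eq_of_heq (Sigma.mk.inj this).2
    · rintro ⟨⟨j, a⟩, ha⟩
      obtain rfl : j = i := hP' _ ha
      exact ⟨a, rfl⟩
  refine ⟨⟨Equiv.ofBijective _ bij, fun f => isEmptyElim f, ?_⟩⟩
  intro n r x
  constructor
  · rintro ⟨j, y, hx, hy⟩
    rcases n with _ | n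
    · have := h3 r j i (by convert hy)
      convert this
    · have hx0 := congrFun hx 0
      obtain rfl : i = j := congrArg Sigma.fst hx0
      convert hy using 1
      funext k
      exact eq_of_heq (Sigma.mk.inj (congrFun hx k)).2
  · intro hr
    exact ⟨i, x, rfl, hr⟩

lemma sub_rel1 {L : FirstOrder.Language.{0,0}} [L.IsRelational] {M : Type} [L.Structure M]
    {s : Set M} (Q : L.Relations 1) (a : s) :
    Structure.RelMap Q ![a] ↔ Structure.RelMap Q ![(a : M)] := by
  apply iff_of_eq
  refine congrArg (Structure.RelMap (M := M) Q) ?_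
  funext k
  simp [Subsingleton.elim k 0]

/-- Models of `T` of cardinality `κ`. -/
abbrev Mods (L : FirstOrder.Language.{0,0}) (T : L.Theory) (κ : Cardinal.{0}) :=
  {N : FirstOrder.Language.Theory.ModelType.{0,0,0} T // #N.1 = κ}

abbrev isoRel {L : FirstOrder.Language.{0,0}} {T : L.Theory} {κ : Cardinal.{0}}
    (N N' : Mods L T κ) : Prop := Nonempty (N.1 ≃[L] N'.1)

lemma isoRel_equivalence {L : FirstOrder.Language.{0,0}} {T : L.Theory} {κ : Cardinal.{0}} :
    Equivalence (isoRel (L := L) (T := T) (κ := κ)) :=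
  ⟨fun N => ⟨FirstOrder.Language.Equiv.refl L N.1⟩, fun ⟨e⟩ => ⟨e.symm⟩, fun ⟨e⟩ ⟨f⟩ => ⟨f.comp e⟩⟩

lemma quot_eq {L : FirstOrder.Language.{0,0}} {T : L.Theory} {κ : Cardinal.{0}}
    {N N' : Mods L T κ} (h : Quot.mk isoRel N = Quot.mk isoRel N') : isoRel N N' :=
  isoRel_equivalence.eqvGen_iff.1 (Quot.eqvGen_exact h)

lemma model_equiv {L : FirstOrder.Language.{0,0}} {A : Type} [L.Structure A] {κ : Cardinal.{0}}
    (N : Mods L (L.completeTheory A) κ) : A ≅[L] N.1 :=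
  elementarilyEquivalent_iff.2 fun φ => (realize_iff_of_model_completeTheory A N.1 φ).symm

/-- Bundle a structure elementarily equivalent to `A`. -/
def mkMod {L : FirstOrder.Language.{0,0}} {A : Type} [L.Structure A] {κ : Cardinal.{0}}
    (K : Type) [L.Structure K] [Nonempty K] (h : A ≅[L] K) (hc : #K = κ) :
    Mods L (L.completeTheory A) κ :=
  haveI : K ⊨ L.completeTheory A := by
    rw [show L.completeTheory A = L.completeTheory K from h]; infer_instance
  ⟨Theory.ModelType.of _ K, hc⟩

lemma numModels_finite {L : FirstOrder.Language.{0,0}} [L.IsRelational] {A : Type} [L.Structure A]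
    [Finite A] [Nonempty A] : numModels L (L.completeTheory A) #A = 1 := by
  refine Cardinal.eq_one_iff_unique.2 ⟨⟨?_⟩, ⟨Quot.mk _ (mkMod A rfl rfl)⟩⟩
  rintro ⟨N⟩ ⟨N'⟩
  apply Quot.sound
  obtain ⟨e⟩ := finite_iso (model_equiv N) N.2.symm
  obtain ⟨e'⟩ := finite_iso (model_equiv N') N'.2.symm
  exact ⟨e'.comp e.symm⟩

lemma numModels_finite_aleph0 {L : FirstOrder.Language.{0,0}} {A : Type} [L.Structure A]
    [Finite A] : numModels L (L.completeTheory A) ℵ₀ = 0 := by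
  refine Cardinal.mk_eq_zero_iff.2 ⟨?_⟩
  rintro ⟨N⟩
  have := min_card (model_equiv N)
  rw [N.2, min_self, min_eq_left (Cardinal.lt_aleph0_of_finite A).le] at this
  exact (Cardinal.lt_aleph0_of_finite A).ne this

theorem count {L : FirstOrder.Language.{0,0}} [L.IsRelational] {M : Type} [L.Structure M]
    {I : Type} [Fintype I] {P : I → L.Relations 1} (hM : Comb P M) [Infinite M] :
    numModels L (L.completeTheory M) ℵ₀ =
      ∏ i : I, numModels L (L.completeTheory (part (P i) M)) (min #(part (P i) M) ℵ₀) := by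
  have partNe : ∀ (N : Type) [L.Structure N], Comb P N → ∀ i, Nonempty (part (P i) N) :=
    fun N _ h i => let ⟨a, ha⟩ := h.ne i; ⟨⟨a, ha⟩⟩
  have partCard : ∀ (N : Type) [L.Structure N], M ≅[L] N → #N = ℵ₀ → ∀ i,
      #(part (P i) N) = min #(part (P i) M) ℵ₀ := by
    intro N _ h hN i
    rw [min_card (part_equiv (P i) h), min_eq_left]
    rw [← hN]
    exact Cardinal.mk_set_le _
  let F0 : Mods L (L.completeTheory M) ℵ₀ → ∀ i,
      Mods L (L.completeTheory (part (P i) M)) (min #(part (P i) M) ℵ₀) := fun N i =>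
    haveI := partNe N.1 (hM.transfer (model_equiv N)) i
    mkMod (part (P i) N.1) (part_equiv (P i) (model_equiv N)) (partCard N.1 (model_equiv N) N.2 i)
  let F : Quot (isoRel (T := L.completeTheory M) (κ := ℵ₀)) →
      ∀ i, Quot (isoRel (T := L.completeTheory (part (P i) M)) (κ := min #(part (P i) M) ℵ₀)) :=
    Quot.lift (fun N i => Quot.mk _ (F0 N i)) (by
      rintro N N' ⟨e⟩
      funext i
      exact Quot.sound (part_iso (P i) e))
  have inj : Function.Injective F := by
    rintro ⟨N⟩ ⟨N'⟩ h
    apply Quot.sound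
    have h' : ∀ i, Nonempty (part (P i) N.1 ≃[L] part (P i) N'.1) :=
      fun i => quot_eq (congrFun h i)
    obtain ⟨e⟩ := sig_iso fun i => (h' i).some
    obtain ⟨e1⟩ := comb_iso (hM.transfer (model_equiv N))
    obtain ⟨e2⟩ := comb_iso (hM.transfer (model_equiv N'))
    exact ⟨(e2.comp e).comp e1.symm⟩
  have surj : Function.Surjective F := by
    intro q
    choose R hR using fun i => Quot.exists_rep (q i)
    have hE := fun i => model_equiv (R i)
    have := partNe M hM
    have hS := sig_equiv (fun i => part (P i) M) (fun i => ((R i).1 : Type)) hE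
    obtain ⟨e0⟩ := comb_iso hM
    have hMS : M ≅[L] (Σ i, ((R i).1 : Type)) :=
      (show M ≅[L] (Σ i, part (P i) M) from elementarilyEquivalent_iff.2
        (StrongHomClass.realize_sentence e0.symm)).trans hS
    have hInf : ℵ₀ ≤ #(Σ i, ((R i).1 : Type)) := by
      have := min_card hMS
      rw [min_eq_right (Cardinal.aleph0_le_mk M)] at this
      exact this.le.trans (min_le_left _ _)
    have hle : #(Σ i, ((R i).1 : Type)) ≤ ℵ₀ := by
      have : ∀ i, Countable (R i).1 := fun i => by
        rw [← Cardinal.mk_le_aleph0_iff, (R i).2]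
        exact min_le_right _ _
      exact Cardinal.mk_le_aleph0
    have hne : Nonempty (Σ i, ((R i).1 : Type)) :=
      Cardinal.mk_ne_zero_iff.1 (ne_of_gt (Cardinal.aleph0_pos.trans_le hInf))
    refine ⟨Quot.mk _ (mkMod (Σ i, ((R i).1 : Type)) hMS (le_antisymm hle hInf)), ?_⟩
    funext i
    rw [← hR i]
    apply Quot.sound
    have hp := sig_part (P := P) (K := fun i => ((R i).1 : Type)) ?_ ?_ ?_ i
    · obtain ⟨e⟩ := hp
      exact ⟨e.symm⟩
    · intro i a
      have := transfer (hE i) (n := 1) (atP (P i) 0) (by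
        intro x
        rw [realize_atP]
        exact (sub_rel1 _ _).2 (x 0).2) (fun _ => a)
      rwa [realize_atP] at this
    · intro i j hij a
      have := transfer (hE j) (n := 1) (atP (P i) 0).not (by
        intro x
        rw [BoundedFormula.realize_not, realize_atP]
        intro h
        exact hM.disj i j hij (x 0).1 ⟨(sub_rel1 _ _).1 h, (x 0).2⟩) (fun _ => a)
      rwa [BoundedFormula.realize_not, realize_atP] at this
    · intro r i j
      have key : ∀ i, (Structure.RelMap r (default : Fin 0 → (R i).1)) ↔
          Structure.RelMap r (default : Fin 0 → M) := by
        intro i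
        have h1 := (elementarilyEquivalent_iff.1 (hE i))
          (BoundedFormula.rel r (fun k : Fin 0 => k.elim0))
        simp only [Sentence.Realize, Formula.Realize, BoundedFormula.Realize] at h1
        have h2 : Structure.RelMap r (default : Fin 0 → part (P i) M) ↔
            Structure.RelMap r (default : Fin 0 → M) := by
          apply iff_of_eq
          exact congrArg (Structure.RelMap (M := M) r) (Subsingleton.elim _ _)
        rw [← h2]
        apply iff_of_eq
        have h1 := propext h1.symm
        convert h1 using 2
      rw [key, key]
      exact id
  have := Cardinal.mk_congr (Equiv.ofBijective F ⟨inj, surj⟩)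
  rw [Cardinal.mk_pi, Cardinal.prod_eq_of_fintype, Cardinal.lift_uzero] at this
  exact this

end Combination

/-- if the predicates `P i` are pairwise disjoint, `I` is finite, each part is
finite, ω-categorical, or Ehrenfeucht, and at least one part is Ehrenfeucht, then the theory
`T = Th(M)` of the infinite disjoint `P`-combination `M` is Ehrenfeucht, and
`I(T,ω) = ∏_{i ∈ I} I(Th(A_i), min(|A_i|, ω))`. -/
theorem stmt4 (L : FirstOrder.Language.{0,0}) [L.IsRelational] (M : Type) [L.Structure M]
    (I : Type) [Fintype I] (P : I → L.Relations 1)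
    (hcard : L.card ≤ ℵ₀)
    (hdisj : ∀ i j : I, i ≠ j → ∀ a : M,
      ¬ (Structure.RelMap (P i) ![a] ∧ Structure.RelMap (P j) ![a]))
    (hne : ∀ i : I, ∃ a : M, Structure.RelMap (P i) ![a])
    (hcover : ∀ a : M, ∃ i : I, Structure.RelMap (P i) ![a])
    (hnocross : ∀ (n : ℕ) (r : L.Relations n) (x : Fin n → M),
      Structure.RelMap r x → ∃ i : I, ∀ k : Fin n, Structure.RelMap (P i) ![x k])
    (hinf : Infinite M)
    (hparts : ∀ i : I,
      Set.Finite {a : M | Structure.RelMap (P i) ![a]} ∨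
        OmegaCategorical L (partTheory L M {a : M | Structure.RelMap (P i) ![a]}) ∨
        Ehrenfeucht L (partTheory L M {a : M | Structure.RelMap (P i) ![a]}))
    (hEhr : ∃ i : I, Ehrenfeucht L (partTheory L M {a : M | Structure.RelMap (P i) ![a]})) :
    Ehrenfeucht L (L.completeTheory M) ∧
      numModels L (L.completeTheory M) ℵ₀ =
        ∏ i : I, numModels L (partTheory L M {a : M | Structure.RelMap (P i) ![a]})
          (min #{a : M | Structure.RelMap (P i) ![a]} ℵ₀) := by
  classical
  have hM : Comb P M := ⟨hdisj, hne, hcover, hnocross⟩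
  have hcount : numModels L (L.completeTheory M) ℵ₀ =
        ∏ i : I, numModels L (partTheory L M {a : M | Structure.RelMap (P i) ![a]})
          (min #{a : M | Structure.RelMap (P i) ![a]} ℵ₀) := count hM
  refine ⟨?_, hcount⟩
  have hfin : ∀ i, Set.Finite {a : M | Structure.RelMap (P i) ![a]} →
      numModels L (partTheory L M {a : M | Structure.RelMap (P i) ![a]})
          (min #{a : M | Structure.RelMap (P i) ![a]} ℵ₀) = 1 ∧
      numModels L (partTheory L M {a : M | Structure.RelMap (P i) ![a]}) ℵ₀ = 0 := by
    intro i h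
    have hf : Finite {a : M | Structure.RelMap (P i) ![a]} := h
    have hn : Nonempty {a : M | Structure.RelMap (P i) ![a]} := let ⟨a, ha⟩ := hne i; ⟨⟨a, ha⟩⟩
    rw [min_eq_left (Cardinal.lt_aleph0_of_finite _).le]
    let _ := subStructure L M {a : M | Structure.RelMap (P i) ![a]}
    exact ⟨numModels_finite, numModels_finite_aleph0⟩
  have hinf' : ∀ i, ¬ Set.Finite {a : M | Structure.RelMap (P i) ![a]} →
      min #{a : M | Structure.RelMap (P i) ![a]} ℵ₀ = ℵ₀ := by
    intro i h
    have : Infinite {a : M | Structure.RelMap (P i) ![a]} := Set.infinite_coe_iff.2 h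
    exact min_eq_right (Cardinal.aleph0_le_mk _)
  have hb : ∀ i, 1 ≤ numModels L (partTheory L M {a : M | Structure.RelMap (P i) ![a]})
          (min #{a : M | Structure.RelMap (P i) ![a]} ℵ₀) ∧
      numModels L (partTheory L M {a : M | Structure.RelMap (P i) ![a]})
          (min #{a : M | Structure.RelMap (P i) ![a]} ℵ₀) < ℵ₀ := by
    intro i
    by_cases h : Set.Finite {a : M | Structure.RelMap (P i) ![a]}
    · rw [(hfin i h).1]
      exact ⟨le_rfl, Cardinal.one_lt_aleph0⟩
    · rw [hinf' i h]
      rcases hparts i with h' | h' | h'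
      · exact absurd h' h
      · rw [h'.symm.symm]
        exact ⟨le_rfl, Cardinal.one_lt_aleph0⟩
      · exact ⟨h'.1.le, h'.2⟩
  obtain ⟨i₀, hi₀⟩ := hEhr
  have hi₀' : 1 < numModels L (partTheory L M {a : M | Structure.RelMap (P i₀) ![a]})
          (min #{a : M | Structure.RelMap (P i₀) ![a]} ℵ₀) := by
    by_cases h : Set.Finite {a : M | Structure.RelMap (P i₀) ![a]}
    · have := hi₀.1
      rw [(hfin i₀ h).2] at this
      exact absurd this (not_lt.2 zero_le_one)
    · rw [hinf' i₀ h]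
      exact hi₀.1
  rw [Ehrenfeucht, hcount]
  choose f hf using fun i => Cardinal.lt_aleph0.1 (hb i).2
  simp only [hf] at hb hi₀' ⊢
  rw [← Nat.cast_prod]
  refine ⟨?_, Cardinal.natCast_lt_aleph0⟩
  have h1 : ∀ i, 1 ≤ f i := fun i => by exact_mod_cast (hb i).1
  have h2 : 1 < f i₀ := by exact_mod_cast hi₀'
  have h3 : f i₀ ≤ ∏ i, f i :=
    Finset.single_le_prod' (f := f) (fun i _ => h1 i) (Finset.mem_univ i₀)
  exact_mod_cast h2.trans_le h3
end
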